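/- Let G be a connected weighted graph on a finite vertex set V with positive edge susceptances and weighted Laplacian L, and fix a reference vertex r, so shift factors Ψ_{ℓ,v} are well defined. Let C ⊆ V be a vertex cut set with |C| = m, let B be a nonempty union of the vertex sets of some (but not all) connected components of G − C, and A = V ∖ (B ∪ C), so that no edge of G joins A and B. Consider the injection shift factor matrix Ψ whose rows are indexed by oriented edges of G and whose columns are indexed by V. Then: (1) the submatrix of Ψ whose rows correspond to edges with both endpoints in A ∪ C and whose columns correspond to buses in C ∪ B has rank at most m; and (2) the submatrix of Ψ whose rows correspond to edges with at least one endpoint in B and whose columns correspond to buses in A ∪ C has rank at most m. -/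

import Mathlib

open Matrix

/-- The weighted Laplacian of a graph on the finite vertex set `V` whose edges are
the pairs `{u,v}` with `w u v > 0`, carrying susceptance `w u v`. -/
def weightedLaplacian {V : Type*} [Fintype V] [DecidableEq V] (w : V → V → ℝ) :
    Matrix V V ℝ :=
  Matrix.of fun u v => if u = v then ∑ x, w u x else -(w u v)

theorem weightedLaplacian_mulVec_apply {V : Type*} [Fintype V] [DecidableEq V]
    {w : V → V → ℝ} (hdiag : ∀ v, w v v = 0) (f : V → ℝ) (u : V) :
    (weightedLaplacian w *ᵥ f) u = ∑ v, w u v * (f u - f v) := by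
  have hentry : ∀ v, weightedLaplacian w u v * f v =
      (if u = v then (∑ x, w u x) * f u else 0) - w u v * f v := by
    intro v
    by_cases h : u = v
    · subst h
      simp [weightedLaplacian, hdiag]
    · simp [weightedLaplacian, h]
  simp only [mulVec, dotProduct, hentry, mul_sub, Finset.sum_sub_distrib, Finset.sum_mul,
    Finset.sum_ite_eq, Finset.mem_univ, if_true]

/-- The Dirichlet form of the weighted Laplacian. -/
theorem two_mul_dotProduct_weightedLaplacian_mulVec {V : Type*} [Fintype V] [DecidableEq V]
    {w : V → V → ℝ} (hsym : ∀ u v, w u v = w v u) (hdiag : ∀ v, w v v = 0) (f : V → ℝ) :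
    2 * ∑ u, f u * (weightedLaplacian w *ᵥ f) u = ∑ u, ∑ v, w u v * (f u - f v) ^ 2 := by
  have hswap : ∑ u, f u * (weightedLaplacian w *ᵥ f) u =
      ∑ u, ∑ v, w u v * (f v * (f v - f u)) := by
    simp only [weightedLaplacian_mulVec_apply hdiag, Finset.mul_sum]
    rw [Finset.sum_comm]
    refine Finset.sum_congr rfl fun u _ => Finset.sum_congr rfl fun v _ => ?_
    rw [hsym v u]
    ring
  rw [two_mul]
  nth_rewrite 2 [hswap]
  simp only [weightedLaplacian_mulVec_apply hdiag, Finset.mul_sum, ← Finset.sum_add_distrib]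
  refine Finset.sum_congr rfl fun u _ => Finset.sum_congr rfl fun v _ => ?_
  ring

theorem eq_of_connected_of_forall_pos {V : Type*} {w : V → V → ℝ}
    (hsym : ∀ u v, w u v = w v u)
    (hconn : (SimpleGraph.fromRel fun u v => 0 < w u v).Connected)
    {α : Type*} {f : V → α} (hf : ∀ u v, 0 < w u v → f u = f v) (u v : V) : f u = f v := by
  obtain ⟨p⟩ := hconn.preconnected u v
  induction p with
  | nil => rfl
  | cons h _ ih =>
    rw [SimpleGraph.fromRel_adj] at h
    refine Eq.trans (hf _ _ ?_) ih
    rcases h.2 with h | h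
    · exact h
    · rwa [hsym]

theorem eq_of_dotProduct_weightedLaplacian_mulVec_eq_zero {V : Type*} [Fintype V] [DecidableEq V]
    {w : V → V → ℝ} (hsym : ∀ u v, w u v = w v u) (hdiag : ∀ v, w v v = 0)
    (hnonneg : ∀ u v, 0 ≤ w u v)
    (hconn : (SimpleGraph.fromRel fun u v => 0 < w u v).Connected) {f : V → ℝ}
    (hf : ∑ u, f u * (weightedLaplacian w *ᵥ f) u = 0) (u v : V) : f u = f v := by
  refine eq_of_connected_of_forall_pos hsym hconn (fun a b hab => ?_) u v
  have henergy := two_mul_dotProduct_weightedLaplacian_mulVec hsym hdiag f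
  rw [hf, mul_zero] at henergy
  have hterm : ∀ a b, 0 ≤ w a b * (f a - f b) ^ 2 := fun a b =>
    mul_nonneg (hnonneg a b) (sq_nonneg _)
  have hrow := (Finset.sum_eq_zero_iff_of_nonneg fun a _ =>
    Finset.sum_nonneg fun b _ => hterm a b).1 henergy.symm a (Finset.mem_univ a)
  have hentry := (Finset.sum_eq_zero_iff_of_nonneg fun b _ => hterm a b).1 hrow b
    (Finset.mem_univ b)
  exact sub_eq_zero.1 (pow_eq_zero_iff two_ne_zero |>.1
    ((mul_eq_zero.1 hentry).resolve_left (ne_of_gt hab)))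

/-- A potential vanishing on a nonempty boundary `C` of `S`, and at each point of `S` either
harmonic or zero, vanishes on `S`. -/
theorem eq_zero_of_harmonic_of_boundary_eq_zero {V : Type*} [Fintype V] [DecidableEq V]
    {w : V → V → ℝ} (hsym : ∀ u v, w u v = w v u) (hdiag : ∀ v, w v v = 0)
    (hnonneg : ∀ u v, 0 ≤ w u v)
    (hconn : (SimpleGraph.fromRel fun u v => 0 < w u v).Connected)
    {S C : Finset V} (hSC : Disjoint S C) (hC : C.Nonempty)
    (hsep : ∀ s ∈ S, ∀ u, u ∉ S → u ∉ C → w s u = 0) {θ : V → ℝ}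
    (hθC : ∀ c ∈ C, θ c = 0)
    (hθS : ∀ s ∈ S, θ s = 0 ∨ (weightedLaplacian w *ᵥ θ) s = 0) :
    ∀ s ∈ S, θ s = 0 := by
  intro s hs
  obtain ⟨c, hc⟩ := hC
  have hconst := eq_of_dotProduct_weightedLaplacian_mulVec_eq_zero hsym hdiag hnonneg hconn
    (f := fun u => if u ∈ S then θ u else 0) ?_ s c
  · simpa [hs, Finset.disjoint_right.1 hSC hc] using hconst
  refine Finset.sum_eq_zero fun u _ => ?_
  by_cases hu : u ∈ S
  · rcases hθS u hu with h | h
    · simp [h]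
    · rw [weightedLaplacian_mulVec_apply hdiag] at h ⊢
      rw [← h.symm.trans (Finset.sum_congr rfl fun v _ => ?_), mul_zero]
      by_cases hv : v ∈ S
      · simp [hu, hv]
      · by_cases hvC : v ∈ C
        · simp [hu, hv, hθC v hvC]
        · simp [hsep u hu v hv hvC]
  · simp [hu]

theorem Matrix.rank_le_rank_of_mulVec_eq_zero {l m n K : Type*} [Fintype l] [Fintype m]
    [Fintype n] [Field K] (M : Matrix m n K) (N : Matrix l n K)
    (h : ∀ x, N *ᵥ x = 0 → M *ᵥ x = 0) : M.rank ≤ N.rank := by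
  have hker : LinearMap.ker N.mulVecLin ≤ LinearMap.ker M.mulVecLin := fun x hx => by
    simpa using h x (by simpa using hx)
  have hfin := Submodule.finrank_mono hker
  have hM := LinearMap.finrank_range_add_finrank_ker M.mulVecLin
  have hN := LinearMap.finrank_range_add_finrank_ker N.mulVecLin
  simp only [Matrix.rank]
  omega

/-- Flows on lines inside `S ∪ C` caused by injections outside `S` have rank at most `|C|`,
where the nonempty set `C` separates `S` from the remaining buses. -/
theorem rank_shift_factor_submatrix_le_card {V : Type*} [Fintype V] [DecidableEq V]
    {w : V → V → ℝ} (hsym : ∀ u v, w u v = w v u) (hdiag : ∀ v, w v v = 0)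
    (hnonneg : ∀ u v, 0 ≤ w u v)
    (hconn : (SimpleGraph.fromRel fun u v => 0 < w u v).Connected)
    {r : V} {Θ : V → V → ℝ} (hΘr : ∀ v, Θ v r = 0)
    (hΘ : ∀ v, weightedLaplacian w *ᵥ Θ v = Pi.single v 1 - Pi.single r 1)
    {Ψ : Matrix (V × V) V ℝ} (hΨ : ∀ ℓ v, Ψ ℓ v = w ℓ.1 ℓ.2 * (Θ v ℓ.2 - Θ v ℓ.1))
    {S C : Finset V} (hSC : Disjoint S C) (hC : C.Nonempty)
    (hsep : ∀ s ∈ S, ∀ u, u ∉ S → u ∉ C → w s u = 0)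
    {ι κ : Type*} [Fintype ι] [Fintype κ] (line : ι → V × V) (bus : κ → V)
    (hline : ∀ i, (line i).1 ∈ S ∪ C ∧ (line i).2 ∈ S ∪ C) (hbus : ∀ k, bus k ∉ S) :
    (Ψ.submatrix line bus).rank ≤ C.card := by
  let N : Matrix C κ ℝ := Matrix.of fun c k => Θ (bus k) c
  refine (Matrix.rank_le_rank_of_mulVec_eq_zero _ N fun x hx => ?_).trans
    (N.rank_le_card_height.trans_eq (Fintype.card_coe C))
  let θ : V → ℝ := ∑ k, x k • Θ (bus k)
  have hθ : ∀ u, θ u = ∑ k, x k * Θ (bus k) u := fun u => by simp [θ]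
  have hθC : ∀ c ∈ C, θ c = 0 := fun c hc => by
    refine (hθ c).trans (Eq.trans ?_ (congrFun hx ⟨c, hc⟩))
    exact Finset.sum_congr rfl fun k _ => mul_comm _ _
  have hθS : ∀ s ∈ S, θ s = 0 := by
    refine eq_zero_of_harmonic_of_boundary_eq_zero hsym hdiag hnonneg hconn hSC hC hsep hθC
      fun s hs => ?_
    by_cases hsr : s = r
    · left
      simp [hθ, hsr, hΘr]
    · right
      have hne : ∀ k, s ≠ bus k := fun k h => hbus k (h ▸ hs)
      simp [θ, Matrix.mulVec_sum, Matrix.mulVec_smul, hΘ, hsr, hne]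
  have hθSC : ∀ u ∈ S ∪ C, θ u = 0 := fun u hu =>
    (Finset.mem_union.1 hu).elim (hθS u) (hθC u)
  ext i
  have hflow : (Ψ.submatrix line bus *ᵥ x) i =
      w (line i).1 (line i).2 * (θ (line i).2 - θ (line i).1) := by
    simp only [mulVec, dotProduct, submatrix_apply, hΨ, hθ, ← Finset.sum_sub_distrib,
      Finset.mul_sum]
    exact Finset.sum_congr rfl fun k _ => by ring
  rw [hflow, hθSC _ (hline i).1, hθSC _ (hline i).2]
  simp

/-- Corollary 1.  Decompose the connected grid by a vertex cut set `C` of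
cardinality `m`: `B` is a nonempty union of some (but not all) of the connected
components of `G − C`, `A = V ∖ (B ∪ C)` is nonempty, and no edge joins `A` and
`B`.  Consider the injection shift factor matrix `Ψ` (rows indexed by oriented
edges, columns by buses, with reference bus `r`).  Then (1) the submatrix with rows
the edges having both endpoints in `A ∪ C` and columns the buses in `C ∪ B` has
rank at most `m`, and (2) the submatrix with rows the edges having an endpoint in
`B` and columns the buses in `A ∪ C` has rank at most `m`. -/
theorem shift_factor_submatrix_rank_le {V : Type*} [Fintype V] [DecidableEq V]
    (w : V → V → ℝ)
    (hsym : ∀ u v, w u v = w v u)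
    (hdiag : ∀ v, w v v = 0)
    (hnonneg : ∀ u v, 0 ≤ w u v)
    (hconn : (SimpleGraph.fromRel fun u v => 0 < w u v).Connected)
    -- the reference bus and the nodal angles defining the shift factors
    (r : V) (Θ : V → V → ℝ)
    (hΘr : ∀ v, Θ v r = 0)
    (hΘ : ∀ v, weightedLaplacian w *ᵥ Θ v = Pi.single v 1 - Pi.single r 1)
    -- the full injection shift factor matrix, rows indexed by oriented pairs
    (Ψ : Matrix (V × V) V ℝ)
    (hΨ : ∀ ℓ v, Ψ ℓ v = w ℓ.1 ℓ.2 * (Θ v ℓ.2 - Θ v ℓ.1))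
    -- the vertex cut set `C` and the decomposition `V = A ∪ C ∪ B`
    (C B : Finset V) (hCB : Disjoint C B) (hB : B.Nonempty)
    (A : Finset V) (hA : A = (C ∪ B)ᶜ) (hAne : A.Nonempty)
    (hsep : ∀ a ∈ A, ∀ b ∈ B, w a b = 0) :
    (Ψ.submatrix
        (fun ℓ : {ℓ : V × V // 0 < w ℓ.1 ℓ.2 ∧ ℓ.1 ∈ A ∪ C ∧ ℓ.2 ∈ A ∪ C} => (ℓ : V × V))
        (fun v : {v : V // v ∈ C ∪ B} => (v : V))).rank ≤ C.card ∧
    (Ψ.submatrix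
        (fun ℓ : {ℓ : V × V // 0 < w ℓ.1 ℓ.2 ∧ (ℓ.1 ∈ B ∨ ℓ.2 ∈ B)} => (ℓ : V × V))
        (fun v : {v : V // v ∈ A ∪ C} => (v : V))).rank ≤ C.card := by
  have hmem : ∀ v, v ∈ A ↔ v ∉ C ∧ v ∉ B := fun v => by simp [hA]
  have hsepA : ∀ a ∈ A, ∀ u, u ∉ A → u ∉ C → w a u = 0 := fun a ha u huA huC =>
    hsep a ha u (by have := hmem u; tauto)
  have hsepB : ∀ b ∈ B, ∀ u, u ∉ B → u ∉ C → w b u = 0 := fun b hb u huB huC => by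
    rw [hsym]
    exact hsep u ((hmem u).2 ⟨huC, huB⟩) b hb
  have hAC : Disjoint A C := Finset.disjoint_left.2 fun a ha => ((hmem a).1 ha).1
  have hC : C.Nonempty := by
    by_contra hempty
    rw [Finset.not_nonempty_iff_eq_empty] at hempty
    obtain ⟨a, ha⟩ := hAne
    obtain ⟨b, hb⟩ := hB
    have hsame := eq_of_connected_of_forall_pos hsym hconn (f := fun u => u ∈ B)
      (fun u v huv => propext ⟨fun hu => by_contra fun hv =>
        huv.ne' (hsepB u hu v hv (by simp [hempty])), fun hv => by_contra fun hu =>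
        huv.ne' (hsym u v ▸ hsepB v hv u hu (by simp [hempty]))⟩) a b
    exact ((hmem a).1 ha).2 (hsame.mpr hb)
  constructor
  · refine rank_shift_factor_submatrix_le_card hsym hdiag hnonneg hconn hΘr hΘ hΨ hAC hC hsepA
      _ _ (fun ℓ => ℓ.2.2) fun v hv => ?_
    have hvA := (hmem v).1 hv
    exact (Finset.mem_union.1 v.2).elim hvA.1 hvA.2
  · refine rank_shift_factor_submatrix_le_card hsym hdiag hnonneg hconn hΘr hΘ hΨ hCB.symm hC
      hsepB _ _ (fun ℓ => ?_) fun v hv => ?_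
    · obtain ⟨⟨a, b⟩, hab, h⟩ := ℓ
      have hnbr : ∀ u ∈ B, ∀ v, 0 < w u v → v ∈ B ∪ C := fun u hu v huv => by
        by_contra hv
        rw [Finset.mem_union, not_or] at hv
        exact huv.ne' (hsepB u hu v hv.1 hv.2)
      rcases h with h | h
      · exact ⟨Finset.mem_union_left _ h, hnbr a h b hab⟩
      · exact ⟨hnbr b h a (hsym a b ▸ hab), Finset.mem_union_left _ h⟩
    · exact (Finset.mem_union.1 v.2).elim (fun h => ((hmem v).1 h).2 hv)
        fun h => Finset.disjoint_left.1 hCB h hv
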